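/- Let p ≥ 7 be an odd integer. For every real number b there exist ε > 0 and a function u, real-analytic on (1−ε, 1+ε), with u(1) = b, satisfying the self-similar profile equation (1−ρ²)u''(ρ) + (2/ρ − (2+2α)ρ)u'(ρ) − α(α+1)u(ρ) + u(ρ)^p = 0 for all ρ ∈ (1−ε, 1+ε) with ρ ≠ 1. Moreover, every function u that is real-analytic at ρ = 1 and satisfies the equation on a punctured neighborhood of ρ = 1 necessarily has u'(1) = (p−1)·u(1)^p/4 − (p+1)·u(1)/(2(p−1)). -/

import Mathlib

open Set Real Filter

/-- The exponent `α = 2/(p-1)`. -/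
noncomputable def alphaP (p : ℕ) : ℝ := 2 / ((p : ℝ) - 1)

/-- `b₀ = (2(p+1)/(p-1)²)^(1/(p-1))`, the constant solution. -/
noncomputable def bZero (p : ℕ) : ℝ :=
  (2 * ((p : ℝ) + 1) / ((p : ℝ) - 1) ^ 2) ^ ((1 : ℝ) / ((p : ℝ) - 1))

/-- `b∞ = (2(p-3)/(p-1)²)^(1/(p-1))`. -/
noncomputable def bInfty (p : ℕ) : ℝ :=
  (2 * ((p : ℝ) - 3) / ((p : ℝ) - 1) ^ 2) ^ ((1 : ℝ) / ((p : ℝ) - 1))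

/-- The singular static solution `u∞(ρ) = b∞ ρ^(-α)`. -/
noncomputable def uInfty (p : ℕ) (ρ : ℝ) : ℝ := bInfty p * ρ ^ (-(alphaP p))

/-- The self-similar profile equation
`(1-ρ²)u'' + (2/ρ - (2+2α)ρ)u' - α(α+1)u + u^p = 0` at the point `ρ`. -/
def ProfileEq (p : ℕ) (u : ℝ → ℝ) (ρ : ℝ) : Prop :=
  (1 - ρ ^ 2) * deriv (deriv u) ρ + (2 / ρ - (2 + 2 * alphaP p) * ρ) * deriv u ρ
    - alphaP p * (alphaP p + 1) * u ρ + u ρ ^ p = 0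

open Polynomial in
noncomputable def resP (p : ℕ) (α : ℝ) (P : ℝ[X]) : ℝ[X] :=
  C 2 * (X * derivative (derivative P)) + C (2 * α) * derivative P
  + C 3 * (X ^ 2 * derivative (derivative P)) + C (4 + 4 * α) * (X * derivative P)
  + C (α * (α + 1)) * P - P ^ p
  + X * (X ^ 2 * derivative (derivative P) + C (2 + 2 * α) * (X * derivative P)
    + C (α * (α + 1)) * P - P ^ p)

open Polynomial in
noncomputable def serP (p : ℕ) (α b : ℝ) : ℕ → ℝ[X]
  | 0 => C b
  | n + 1 => serP p α b n +
      monomial (n + 1) (-((resP p α (serP p α b n)).coeff n / ((n + 1) * (2 * n + 2 * α))))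

noncomputable def serC (p : ℕ) (α b : ℝ) (n : ℕ) : ℝ := (serP p α b n).coeff n

open Polynomial in
lemma coeff_X_dd (P : ℝ[X]) (n : ℕ) :
    (X * derivative (derivative P)).coeff n = (n + 1) * n * P.coeff (n + 1) := by
  cases n with
  | zero => simp
  | succ n => rw [coeff_X_mul]; simp only [coeff_derivative]; push_cast; ring

open Polynomial in
lemma coeff_X_d (P : ℝ[X]) (n : ℕ) :
    (X * derivative P).coeff n = n * P.coeff n := by
  cases n with
  | zero => simp
  | succ n => rw [coeff_X_mul]; simp only [coeff_derivative]; push_cast; ring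

open Polynomial in
lemma coeff_X2_dd (P : ℝ[X]) (n : ℕ) :
    (X ^ 2 * derivative (derivative P)).coeff n = n * (n - 1) * P.coeff n := by
  rw [pow_two, mul_assoc]
  cases n with
  | zero => simp
  | succ n => rw [coeff_X_mul, coeff_X_dd]; push_cast; ring

lemma serP_coeff (p : ℕ) (α b : ℝ) (n k : ℕ) :
    (serP p α b n).coeff k = if k ≤ n then serC p α b k else 0 := by
  induction n with
  | zero =>
    cases k with
    | zero => simp [serC]
    | succ k => simp [serP, Polynomial.coeff_C]
  | succ n ih =>
    rcases Nat.lt_trichotomy k (n + 1) with h | h | h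
    · rw [serP, Polynomial.coeff_add, ih, Polynomial.coeff_monomial, if_pos (by omega : k ≤ n),
        if_neg (by omega : ¬ n + 1 = k), if_pos (by omega : k ≤ n + 1), add_zero]
    · subst h; simp [serC]
    · rw [serP, Polynomial.coeff_add, ih, Polynomial.coeff_monomial, if_neg (by omega),
        if_neg (by omega), if_neg (by omega), add_zero]

lemma serC_zero (p : ℕ) (α b : ℝ) : serC p α b 0 = b := by simp [serC, serP]

lemma serC_succ (p : ℕ) (α b : ℝ) (n : ℕ) : serC p α b (n + 1) =
    -((resP p α (serP p α b n)).coeff n / ((n + 1) * (2 * n + 2 * α))) := by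
  rw [serC, serP, Polynomial.coeff_add, serP_coeff, if_neg (by omega)]
  simp

open Polynomial in
lemma pow_coeff_congr (P Q : ℝ[X]) (n p : ℕ) (h : ∀ k ≤ n, P.coeff k = Q.coeff k) :
    ∀ k ≤ n, (P ^ p).coeff k = (Q ^ p).coeff k := by
  have h1 : X ^ (n + 1) ∣ P - Q := by
    rw [X_pow_dvd_iff]; intro d hd; rw [coeff_sub, h d (by omega), sub_self]
  have h2 := h1.trans (sub_dvd_pow_sub_pow P Q p)
  rw [X_pow_dvd_iff] at h2
  intro k hk
  have := h2 k (by omega)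
  rw [coeff_sub] at this
  linarith

open Polynomial in
lemma resP_coeff_zero (p : ℕ) (α : ℝ) (P : ℝ[X]) : (resP p α P).coeff 0 =
    2 * α * P.coeff 1 + α * (α + 1) * P.coeff 0 - (P ^ p).coeff 0 := by
  simp only [resP, coeff_add, coeff_sub, coeff_C_mul, coeff_X_dd, coeff_X_d, coeff_X2_dd,
    coeff_derivative, coeff_X_mul_zero]
  simp

open Polynomial in
lemma resP_coeff_succ (p : ℕ) (α : ℝ) (P : ℝ[X]) (n : ℕ) : (resP p α P).coeff (n + 1) =
    ((n + 1) + 1) * (2 * (n + 1) + 2 * α) * P.coeff (n + 2)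
    + (3 * ((n + 1) * n) + (4 + 4 * α) * (n + 1) + α * (α + 1)) * P.coeff (n + 1)
     - (P ^ p).coeff (n + 1)
    + ((n * (n - 1)) + (2 + 2 * α) * n + α * (α + 1)) * P.coeff n - (P ^ p).coeff n := by
  simp only [resP, coeff_add, coeff_sub, coeff_C_mul, coeff_X_dd, coeff_X_d, coeff_X2_dd,
    coeff_derivative, coeff_X_mul]
  push_cast; ring

lemma resP_serP (p : ℕ) (α b : ℝ) (hα : 0 < α) (N n : ℕ) (hn : n < N) :
    (resP p α (serP p α b N)).coeff n = 0 := by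
  have key : ∀ k ≤ n, (serP p α b N ^ p).coeff k = (serP p α b n ^ p).coeff k := by
    apply pow_coeff_congr
    intro k hk
    rw [serP_coeff, serP_coeff, if_pos (by omega), if_pos hk]
  have hs := serC_succ p α b n
  have hD : ((n + 1 : ℝ) * (2 * n + 2 * α)) ≠ 0 := by positivity
  rw [eq_neg_iff_add_eq_zero, ← sub_neg_eq_add, sub_eq_zero, eq_comm, neg_eq_iff_eq_neg, div_eq_iff hD] at hs
  cases n with
  | zero =>
    rw [resP_coeff_zero] at hs ⊢
    rw [key 0 le_rfl]
    simp only [serP_coeff] at hs ⊢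
    rw [if_pos (by omega), if_pos (by omega)]
    simp at hs ⊢
    linarith
  | succ n =>
    rw [resP_coeff_succ] at hs ⊢
    rw [key (n+1) le_rfl, key n (by omega)]
    simp only [serP_coeff] at hs ⊢
    rw [if_pos (by omega), if_pos (by omega), if_pos (by omega)]
    rw [if_neg (by omega), if_pos (by omega), if_pos (by omega)] at hs
    push_cast at hs ⊢
    linarith

open Polynomial in
lemma major_pow (P Q : ℝ[X]) (h : ∀ k, |P.coeff k| ≤ Q.coeff k) (p : ℕ) :
    ∀ k, |(P ^ p).coeff k| ≤ (Q ^ p).coeff k := by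
  induction p with
  | zero => intro k; simp only [pow_zero, coeff_one]; split_ifs <;> simp
  | succ p ih =>
    intro k
    rw [pow_succ, pow_succ, coeff_mul, coeff_mul]
    refine (Finset.abs_sum_le_sum_abs _ _).trans (Finset.sum_le_sum fun x _ => ?_)
    rw [abs_mul]
    exact mul_le_mul (ih _) (h _) (abs_nonneg _) ((abs_nonneg _).trans (ih _))

open Polynomial in
lemma sum_coeff_le (Q : ℝ[X]) (h : ∀ k, 0 ≤ Q.coeff k) (r : ℝ) (hr : 0 ≤ r) (N : ℕ) :
    ∑ n ∈ Finset.range N, Q.coeff n * r ^ n ≤ Q.eval r := by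
  rw [eval_eq_sum_range' (lt_of_lt_of_le (Nat.lt_succ_self _) (le_max_left (Q.natDegree + 1) N))]
  apply Finset.sum_le_sum_of_subset_of_nonneg
  · intro x; simp; omega
  · intro i _ _; exact mul_nonneg (h i) (by positivity)

/-- recurrence bound -/
lemma serC_bound (p : ℕ) (α b : ℝ) (hα : 0 < α) (hα1 : α ≤ 1) (w : ℕ → ℝ) (n : ℕ)
    (hw : ∀ k ≤ n, |serC p α b k| + |(serP p α b n ^ p).coeff k| ≤ w k) :
    |serC p α b (n + 1)| ≤ 5 / α * (w n + if n = 0 then 0 else w (n - 1)) := by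
  have hD : (0 : ℝ) < ((n + 1 : ℝ) * (2 * n + 2 * α)) := by positivity
  have hD2 : 2 * α * (n + 1) ^ 2 ≤ ((n + 1 : ℝ) * (2 * n + 2 * α)) := by
    have : (0:ℝ) ≤ (n + 1) * n * (1 - α) := mul_nonneg (by positivity) (by linarith)
    nlinarith
  have hw0 : ∀ k ≤ n, 0 ≤ w k := fun k hk => le_trans (by positivity) (hw k hk)
  rw [serC_succ, abs_neg, abs_div, abs_of_pos hD, div_le_iff₀ hD]
  have hW : 0 ≤ (w n + if n = 0 then 0 else w (n - 1)) := by
    split_ifs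
    · simpa using hw0 n le_rfl
    · exact add_nonneg (hw0 _ le_rfl) (hw0 _ (by omega))
  have : |(resP p α (serP p α b n)).coeff n| ≤
      10 * (n + 1) ^ 2 * (w n + if n = 0 then 0 else w (n - 1)) := by
    cases n with
    | zero =>
      have h0 := hw 0 le_rfl
      rw [resP_coeff_zero]
      simp only [serP_coeff]
      simp only [if_true, le_refl]
      rw [if_neg (by omega)]
      have := abs_nonneg (serC p α b 0)
      have := abs_nonneg ((serP p α b 0 ^ p).coeff 0)
      have hk : α * (α + 1) ≤ 2 := by nlinarith
      have hk0 : 0 ≤ α * (α + 1) := by positivity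
      calc _ = |α * (α + 1) * serC p α b 0 - (serP p α b 0 ^ p).coeff 0| := by ring_nf
        _ ≤ |α * (α + 1) * serC p α b 0| + |(serP p α b 0 ^ p).coeff 0| := abs_sub _ _
        _ = (α * (α + 1)) * |serC p α b 0| + |(serP p α b 0 ^ p).coeff 0| := by
            rw [abs_mul, abs_of_nonneg hk0]
        _ ≤ _ := by norm_num; nlinarith
    | succ n =>
      have h1 := hw (n + 1) le_rfl
      have h0 := hw n (by omega)
      rw [resP_coeff_succ]
      simp only [serP_coeff]
      rw [if_neg (by omega), if_pos (by omega), if_pos (by omega), if_neg (by omega)]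
      set c1 := serC p α b (n + 1)
      set c0 := serC p α b n
      set q1 := (serP p α b (n + 1) ^ p).coeff (n + 1)
      set q0 := (serP p α b (n + 1) ^ p).coeff n
      have hk : α * (α + 1) ≤ 2 := by nlinarith
      have hk0 : 0 ≤ α * (α + 1) := by positivity
      have hn : (0 : ℝ) ≤ n := by positivity
      have hnn : (0 : ℝ) ≤ n * (n - 1) := by
        rcases Nat.eq_zero_or_pos n with h | h
        · simp [h]
        · have : (1 : ℝ) ≤ n := by exact_mod_cast h
          exact mul_nonneg hn (by linarith)
      have hαn : α * n ≤ n := by nlinarith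
      set A := (3 * (((n : ℝ) + 1) * n) + (4 + 4 * α) * (n + 1) + α * (α + 1)) with hA
      set B := (((n : ℝ) * (n - 1)) + (2 + 2 * α) * n + α * (α + 1)) with hB
      have hA0 : 0 ≤ A := by positivity
      have hB0 : 0 ≤ B := by
        have : 0 ≤ (2 + 2 * α) * (n : ℝ) := by positivity
        linarith
      set K : ℝ := 10 * ((n + 1 : ℝ) + 1) ^ 2 with hK
      have hAK : A ≤ K := by rw [hA, hK]; nlinarith
      have hBK : B ≤ K := by rw [hB, hK]; nlinarith
      have hK1 : 1 ≤ K := by rw [hK]; nlinarith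
      have e1 : |A * c1| ≤ K * |c1| := by
        rw [abs_mul, abs_of_nonneg hA0]; exact mul_le_mul_of_nonneg_right hAK (abs_nonneg _)
      have e2 : |B * c0| ≤ K * |c0| := by
        rw [abs_mul, abs_of_nonneg hB0]; exact mul_le_mul_of_nonneg_right hBK (abs_nonneg _)
      have e3 : |q1| ≤ K * |q1| := le_mul_of_one_le_left (abs_nonneg _) hK1
      have e4 : |q0| ≤ K * |q0| := le_mul_of_one_le_left (abs_nonneg _) hK1
      have e5 : K * (|c1| + |q1| + (|c0| + |q0|)) ≤ K * (w (n + 1) + w n) :=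
        mul_le_mul_of_nonneg_left (add_le_add h1 h0) (by linarith)
      push_cast
      refine le_trans ?_ e5
      rw [abs_le] at *
      constructor <;> linarith [e1.1, e1.2, e2.1, e2.2, neg_abs_le q1, le_abs_self q1, neg_abs_le q0, le_abs_self q0]
  refine this.trans ?_
  have e : 5 / α * (w n + if n = 0 then 0 else w (n - 1)) * (2 * α * (n + 1) ^ 2) =
      10 * (n + 1) ^ 2 * (w n + if n = 0 then 0 else w (n - 1)) := by
    field_simp; ring
  rw [← e]
  exact mul_le_mul_of_nonneg_left hD2 (mul_nonneg (by positivity) hW)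

open Polynomial in
lemma serC_sum_bound (p : ℕ) (α b : ℝ) (hα : 0 < α) (hα1 : α ≤ 1) :
    ∃ r : ℝ, 0 < r ∧ ∀ N, ∑ n ∈ Finset.range (N + 1), |serC p α b n| * r ^ n ≤ |b| + 1 := by
  set B := |b| + 1
  have hB : 0 < B := by positivity
  set K := 5 / α * (B + B ^ p)
  have hK : 0 < K := by positivity
  set r := 1 / (1 + 2 * K)
  have hr : 0 < r := by positivity
  have hr1 : r ≤ 1 := by
    rw [div_le_one (by positivity)]; linarith
  have hrK : r * (2 * K) ≤ 1 := by
    rw [div_mul_eq_mul_div, div_le_one (by positivity)]; linarith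
  refine ⟨r, hr, fun N => ?_⟩
  induction N with
  | zero => simp [serC_zero]; simp [B]
  | succ N ih =>
    set Q : ℝ[X] := ∑ n ∈ Finset.range (N + 1), monomial n |serC p α b n| with hQ
    have hQc : ∀ k, Q.coeff k = if k ≤ N then |serC p α b k| else 0 := by
      intro k
      rw [hQ, finsetSum_coeff]
      simp only [coeff_monomial]
      rw [Finset.sum_ite_eq' (Finset.range (N + 1))]
      simp
    have hQ0 : ∀ k, 0 ≤ Q.coeff k := by
      intro k; rw [hQc]; split_ifs <;> positivity
    have hQe : Q.eval r ≤ B := by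
      rw [hQ, eval_finsetSum]; simpa only [eval_monomial] using ih
    have hQe0 : 0 ≤ Q.eval r := by
      simpa using sum_coeff_le Q hQ0 r hr.le 0
    have hmaj : ∀ n ≤ N, ∀ k, |(serP p α b n ^ p).coeff k| ≤ (Q ^ p).coeff k := by
      intro n hn
      apply major_pow
      intro k
      rw [hQc, serP_coeff]
      split_ifs
      · rfl
      · omega
      · simp
      · simp
    have hQp0 : ∀ k, 0 ≤ (Q ^ p).coeff k := fun k => (abs_nonneg _).trans (hmaj 0 (by omega) k)
    let w : ℕ → ℝ := fun k => Q.coeff k + (Q ^ p).coeff k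
    have hw0 : ∀ k, 0 ≤ w k := fun k => add_nonneg (hQ0 k) (hQp0 k)
    have hws : ∀ M, ∑ n ∈ Finset.range M, w n * r ^ n ≤ B + B ^ p := by
      intro M
      simp only [w, add_mul, Finset.sum_add_distrib]
      refine add_le_add ((sum_coeff_le Q hQ0 r hr.le M).trans hQe) ?_
      refine (sum_coeff_le _ hQp0 r hr.le M).trans ?_
      rw [eval_pow]
      exact pow_le_pow_left₀ hQe0 hQe p
    have hrec : ∀ n ∈ Finset.range (N + 1), |serC p α b (n + 1)| * r ^ (n + 1) ≤
        5 / α * r * (w n * r ^ n + (if n = 0 then 0 else w (n - 1)) * r ^ n) := by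
      intro n hn
      have hn' : n ≤ N := by simp at hn; omega
      have := serC_bound p α b hα hα1 w n (by
        intro k hk
        refine add_le_add ?_ (hmaj n hn' k)
        rw [hQc, if_pos (by omega)])
      calc _ ≤ (5 / α * (w n + if n = 0 then 0 else w (n - 1))) * r ^ (n + 1) :=
            mul_le_mul_of_nonneg_right this (by positivity)
        _ = _ := by ring
    rw [Finset.sum_range_succ', serC_zero]
    have h2 : ∑ n ∈ Finset.range (N + 1), (if n = 0 then 0 else w (n - 1)) * r ^ n ≤ B + B ^ p := by
      rw [Finset.sum_range_succ']
      simp only [Nat.add_sub_cancel, Nat.succ_ne_zero, if_false, if_true, zero_mul, add_zero]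
      refine le_trans (Finset.sum_le_sum fun i _ => ?_) (hws N)
      exact mul_le_mul_of_nonneg_left (pow_le_pow_of_le_one hr.le hr1 (by omega)) (hw0 i)
    have h3 := Finset.sum_le_sum hrec
    rw [← Finset.mul_sum, Finset.sum_add_distrib] at h3
    have h4 : 5 / α * r * (∑ n ∈ Finset.range (N + 1), w n * r ^ n +
        ∑ n ∈ Finset.range (N + 1), (if n = 0 then 0 else w (n - 1)) * r ^ n) ≤
        5 / α * r * ((B + B ^ p) + (B + B ^ p)) :=
      mul_le_mul_of_nonneg_left (add_le_add (hws _) h2) (by positivity)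
    have h5 : 5 / α * r * ((B + B ^ p) + (B + B ^ p)) = r * (2 * K) := by simp only [K]; ring
    simp only [pow_zero, mul_one]
    simp only [B]
    linarith

lemma tsum_analytic (a : ℕ → ℝ) (r C : ℝ) (hr : 0 < r) (h : ∀ n, |a n| * r ^ n ≤ C) :
    AnalyticOnNhd ℝ (fun ρ => ∑' n, a n * (ρ - 1) ^ n) (Metric.ball 1 r) := by
  set s := FormalMultilinearSeries.ofScalars ℝ a with hs
  have hrad : ENNReal.ofReal r ≤ s.radius := by
    apply FormalMultilinearSeries.le_radius_of_bound (r := r.toNNReal) s C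
    intro n
    rw [hs, FormalMultilinearSeries.ofScalars_norm, Real.coe_toNNReal _ hr.le]
    exact h n
  have hpos : 0 < s.radius := lt_of_lt_of_le (by simpa using hr) hrad
  have h1 := (s.hasFPowerSeriesOnBall hpos).analyticOnNhd
  have hsum : ∀ x, s.sum x = ∑' n, a n * x ^ n := by
    intro x
    rw [FormalMultilinearSeries.sum]
    simp [hs, mul_comm]
  have : (fun ρ => ∑' n, a n * (ρ - 1) ^ n) = s.sum ∘ fun ρ : ℝ => ρ - 1 := by
    ext ρ; simp [hsum]
  rw [this]
  intro ρ hρ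
  apply AnalyticAt.comp
  · apply h1
    rw [Metric.mem_ball, Real.dist_eq] at hρ
    have : ENNReal.ofReal |ρ - 1| < s.radius :=
      lt_of_lt_of_le ((ENNReal.ofReal_lt_ofReal_iff hr).2 hρ) hrad
    rw [Metric.mem_eball, edist_zero_right, ← ofReal_norm, Real.norm_eq_abs]
    exact this
  · fun_prop

lemma tsum_split (a : ℕ → ℝ) (r C : ℝ) (hr : 0 < r) (h : ∀ n, |a n| * r ^ n ≤ C) (N : ℕ) :
    ∃ v : ℝ → ℝ, AnalyticAt ℝ v 1 ∧ ∀ᶠ ρ in nhds (1 : ℝ), ∑' n, a n * (ρ - 1) ^ n =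
      ∑ n ∈ Finset.range N, a n * (ρ - 1) ^ n + (ρ - 1) ^ N * v ρ := by
  refine ⟨fun ρ => ∑' n, a (n + N) * (ρ - 1) ^ n, ?_, ?_⟩
  · refine tsum_analytic (fun n => a (n + N)) r (C / r ^ N) hr (fun n => ?_) 1 (by simpa using hr)
    rw [le_div_iff₀ (by positivity), mul_assoc, ← pow_add]
    exact h _
  · filter_upwards [Metric.ball_mem_nhds (1 : ℝ) hr] with ρ hρ
    rw [Metric.mem_ball, Real.dist_eq] at hρ
    have hsum : Summable fun n => a n * (ρ - 1) ^ n := by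
      have hg : Summable fun n : ℕ => C * (|ρ - 1| / r) ^ n :=
        (summable_geometric_of_lt_one (by positivity) ((div_lt_one hr).2 hρ)).mul_left C
      refine Summable.of_norm_bounded hg fun n => ?_
      rw [norm_mul, norm_pow, Real.norm_eq_abs, Real.norm_eq_abs, div_pow, mul_div_assoc',
        le_div_iff₀ (by positivity)]
      calc _ = (|a n| * r ^ n) * |ρ - 1| ^ n := by ring
        _ ≤ _ := mul_le_mul_of_nonneg_right (h n) (by positivity)
    rw [← hsum.sum_add_tsum_nat_add N, ← tsum_mul_left]
    congr 1
    apply tsum_congr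
    intro n
    ring

open Polynomial in
lemma deriv_step (u v : ℝ → ℝ) (P : ℝ[X]) (k : ℕ) (hv : AnalyticAt ℝ v 1)
    (h : ∀ᶠ ρ in nhds (1 : ℝ), u ρ = P.eval (ρ - 1) + (ρ - 1) ^ (k + 1) * v ρ) :
    ∃ v1 : ℝ → ℝ, AnalyticAt ℝ v1 1 ∧ ∀ᶠ ρ in nhds (1 : ℝ),
      deriv u ρ = (derivative P).eval (ρ - 1) + (ρ - 1) ^ k * v1 ρ := by
  refine ⟨fun ρ => (k + 1) * v ρ + (ρ - 1) * deriv v ρ, ?_, ?_⟩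
  · have := hv.deriv
    fun_prop
  · have h' : u =ᶠ[nhds 1] fun ρ => P.eval (ρ - 1) + (ρ - 1) ^ (k + 1) * v ρ := h
    filter_upwards [h'.deriv, hv.eventually_analyticAt] with ρ h1 h2
    rw [h1]
    have e0 : HasDerivAt (fun ρ : ℝ => ρ - 1) 1 ρ := (hasDerivAt_id ρ).sub_const 1
    have e1 : HasDerivAt (fun ρ : ℝ => P.eval (ρ - 1)) ((derivative P).eval (ρ - 1) * 1) ρ :=
      HasDerivAt.comp (h₂ := fun x : ℝ => P.eval x) ρ (P.hasDerivAt (ρ - 1)) e0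
    have e2 := e1.add ((e0.pow (k + 1)).mul h2.differentiableAt.hasDerivAt)
    refine e2.deriv.trans ?_
    simp only [Nat.add_sub_cancel, Pi.pow_apply]
    push_cast
    ring

lemma eval_eq_serP (p : ℕ) (α b : ℝ) (N : ℕ) (x : ℝ) :
    (serP p α b N).eval x = ∑ n ∈ Finset.range (N + 1), serC p α b n * x ^ n := by
  have hd : (serP p α b N).natDegree < N + 1 := by
    rw [Nat.lt_succ_iff, Polynomial.natDegree_le_iff_coeff_eq_zero]
    intro k hk
    rw [serP_coeff, if_neg (by omega)]
  rw [Polynomial.eval_eq_sum_range' hd]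
  refine Finset.sum_congr rfl fun n hn => ?_
  rw [serP_coeff, if_pos (by simp at hn; omega)]

noncomputable def resF (p : ℕ) (α : ℝ) (u : ℝ → ℝ) (ρ : ℝ) : ℝ :=
  (ρ - 1) * (2 + 3 * (ρ - 1) + (ρ - 1) ^ 2) * deriv (deriv u) ρ
  + (2 * α + (4 + 4 * α) * (ρ - 1) + (2 + 2 * α) * (ρ - 1) ^ 2) * deriv u ρ
  + (1 + (ρ - 1)) * (α * (α + 1) * u ρ - u ρ ^ p)

open Polynomial in
lemma resF_zero (p : ℕ) (α b : ℝ) (hα : 0 < α) (r C : ℝ) (hr : 0 < r)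
    (h : ∀ n, |serC p α b n| * r ^ n ≤ C) :
    ∀ᶠ ρ in nhds (1 : ℝ), resF p α (fun ρ => ∑' n, serC p α b n * (ρ - 1) ^ n) ρ = 0 := by
  set u : ℝ → ℝ := fun ρ => ∑' n, serC p α b n * (ρ - 1) ^ n with hu
  have hua : AnalyticAt ℝ u 1 := tsum_analytic _ r C hr h 1 (by simpa using hr)
  have hua1 := hua.deriv
  have hua2 := hua1.deriv
  have hg : AnalyticAt ℝ (resF p α u) 1 := by
    unfold resF; fun_prop
  rw [← analyticOrderAt_eq_top]
  rw [ENat.eq_top_iff_forall_ge]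
  intro N
  rw [natCast_le_analyticOrderAt hg]
  obtain ⟨v, hv, hv'⟩ := tsum_split (serC p α b) r C hr h (N + 2)
  set P := serP p α b (N + 1) with hP
  have h0 : ∀ᶠ ρ in nhds (1 : ℝ), u ρ = P.eval (ρ - 1) + (ρ - 1) ^ (N + 1 + 1) * v ρ := by
    filter_upwards [hv'] with ρ hρ
    rw [hP, eval_eq_serP, hu]
    exact hρ
  obtain ⟨v1, hv1, h1⟩ := deriv_step u v P (N + 1) hv h0
  obtain ⟨v2, hv2, h2⟩ := deriv_step (deriv u) v1 (derivative P) N hv1 h1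
  have hdvd : X ^ N ∣ resP p α P := by
    rw [X_pow_dvd_iff]
    intro d hd
    exact resP_serP p α b hα (N + 1) d (by omega)
  obtain ⟨S, hS⟩ := hdvd
  refine ⟨fun ρ => S.eval (ρ - 1) + ((ρ - 1) * (2 + 3 * (ρ - 1) + (ρ - 1) ^ 2) * v2 ρ
    + (2 * α + (4 + 4 * α) * (ρ - 1) + (2 + 2 * α) * (ρ - 1) ^ 2) * ((ρ - 1) * v1 ρ)
    + (1 + (ρ - 1)) * (α * (α + 1) * ((ρ - 1) ^ 2 * v ρ) -
      (∑ i ∈ Finset.range p, u ρ ^ i * (P.eval (ρ - 1)) ^ (p - 1 - i)) * ((ρ - 1) ^ 2 * v ρ))),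
    ?_, ?_⟩
  · have hpoly : ∀ T : ℝ[X], AnalyticAt ℝ (fun ρ : ℝ => T.eval (ρ - 1)) 1 := by
      intro T
      have := AnalyticAt.aeval_polynomial (𝕜 := ℝ) (f := fun ρ : ℝ => ρ - 1) (z := (1:ℝ)) (by fun_prop) T
      simpa using this
    have hS' := hpoly S
    have hP' := hpoly P
    have hsum : AnalyticAt ℝ (fun ρ => ∑ i ∈ Finset.range p, u ρ ^ i * (P.eval (ρ - 1)) ^ (p - 1 - i)) 1 := by
      apply Finset.analyticAt_fun_sum
      intro i _
      fun_prop
    fun_prop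
  · filter_upwards [h0, h1, h2] with ρ e0 e1 e2
    have hR : (resP p α P).eval (ρ - 1) = (ρ - 1) ^ N * S.eval (ρ - 1) := by
      rw [hS]; simp
    have hgeo := geom_sum₂_mul (u ρ) (P.eval (ρ - 1)) p
    have hup : u ρ - P.eval (ρ - 1) = (ρ - 1) ^ N * ((ρ - 1) ^ 2 * v ρ) := by rw [e0]; ring
    rw [hup] at hgeo
    set G := ∑ i ∈ Finset.range p, u ρ ^ i * (P.eval (ρ - 1)) ^ (p - 1 - i)
    have hup' : u ρ ^ p = P.eval (ρ - 1) ^ p + G * ((ρ - 1) ^ N * ((ρ - 1) ^ 2 * v ρ)) := by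
      linarith
    rw [smul_eq_mul, mul_add, ← hR, resF, hup', e0, e1, e2]
    simp only [resP, eval_add, eval_sub, eval_mul, eval_C, eval_X, eval_pow]
    ring

lemma resF_profile (p : ℕ) (u : ℝ → ℝ) (ρ : ℝ) (hρ : 0 < ρ)
    (h : resF p (alphaP p) u ρ = 0) : ProfileEq p u ρ := by
  unfold ProfileEq
  have : (1 - ρ ^ 2) * deriv (deriv u) ρ + (2 / ρ - (2 + 2 * alphaP p) * ρ) * deriv u ρ
    - alphaP p * (alphaP p + 1) * u ρ + u ρ ^ p = - resF p (alphaP p) u ρ / ρ := by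
    unfold resF
    field_simp
    ring
  rw [this, h]; simp

/-- For each `b` there is a solution of the profile equation,
real-analytic on a neighborhood of `ρ = 1`, with `u(1) = b`; and every solution
real-analytic at `ρ = 1` has `u'(1) = (p-1)u(1)^p/4 - (p+1)u(1)/(2(p-1))`. -/
theorem local_existence_at_one (p : ℕ) (hp_odd : Odd p) (hp : 7 ≤ p) (b : ℝ) :
    (∃ ε : ℝ, 0 < ε ∧ ∃ u : ℝ → ℝ, AnalyticOnNhd ℝ u (Ioo (1 - ε) (1 + ε)) ∧
      u 1 = b ∧
      (∀ ρ ∈ Ioo (1 - ε) (1 + ε), ρ ≠ 1 → ProfileEq p u ρ)) ∧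
    (∀ u : ℝ → ℝ, AnalyticAt ℝ u 1 →
      (∃ ε : ℝ, 0 < ε ∧ ∀ ρ ∈ Ioo (1 - ε) (1 + ε), ρ ≠ 1 → ProfileEq p u ρ) →
      deriv u 1 = ((p : ℝ) - 1) * u 1 ^ p / 4 - ((p : ℝ) + 1) * u 1 / (2 * ((p : ℝ) - 1))) := by
  have hp' : (7 : ℝ) ≤ p := by exact_mod_cast hp
  have hp1 : (0 : ℝ) < p - 1 := by linarith
  constructor
  · have hα : 0 < alphaP p := by unfold alphaP; positivity
    have hα1 : alphaP p ≤ 1 := by unfold alphaP; rw [div_le_one hp1]; linarith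
    obtain ⟨r, hr, hsum⟩ := serC_sum_bound p (alphaP p) b hα hα1
    have hb : ∀ n, |serC p (alphaP p) b n| * r ^ n ≤ |b| + 1 := fun n =>
      le_trans (Finset.single_le_sum (f := fun n => |serC p (alphaP p) b n| * r ^ n)
        (fun i _ => by positivity) (Finset.self_mem_range_succ n)) (hsum n)
    have hz := resF_zero p (alphaP p) b hα r _ hr hb
    obtain ⟨δ, hδ, hz⟩ := Metric.eventually_nhds_iff_ball.1 (hz.and (lt_mem_nhds one_pos))
    refine ⟨min r δ, lt_min hr hδ,
      fun ρ => ∑' n, serC p (alphaP p) b n * (ρ - 1) ^ n, ?_, ?_, fun ρ hρ _ => ?_⟩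
    · rw [← Real.ball_eq_Ioo]
      exact (tsum_analytic _ r _ hr hb).mono (Metric.ball_subset_ball (min_le_left _ _))
    · show ∑' n, serC p (alphaP p) b n * ((1:ℝ) - 1) ^ n = b
      rw [tsum_eq_single 0]
      · simp [serC_zero]
      · intro n hn; simp [hn]
    · rw [← Real.ball_eq_Ioo] at hρ
      obtain ⟨h1, h2⟩ := hz ρ (Metric.ball_subset_ball (min_le_right _ _) hρ)
      exact resF_profile p _ ρ h2 h1
  · rintro u hu ⟨ε, hε, h⟩
    have c0 := hu.continuousAt
    have c1 := hu.deriv.continuousAt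
    have c2 := hu.deriv.deriv.continuousAt
    have hc : ContinuousAt (fun ρ : ℝ => (1 - ρ ^ 2) * deriv (deriv u) ρ +
        (2 / ρ - (2 + 2 * alphaP p) * ρ) * deriv u ρ
        - alphaP p * (alphaP p + 1) * u ρ + u ρ ^ p) 1 := by
      have : ContinuousAt (fun ρ : ℝ => 2 / ρ) 1 :=
        continuousAt_const.div continuousAt_id one_ne_zero
      fun_prop
    have hl := hc.tendsto.mono_left (nhdsWithin_le_nhds (s := {1}ᶜ))
    have hl2 : Tendsto (fun ρ : ℝ => (1 - ρ ^ 2) * deriv (deriv u) ρ +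
        (2 / ρ - (2 + 2 * alphaP p) * ρ) * deriv u ρ
        - alphaP p * (alphaP p + 1) * u ρ + u ρ ^ p) (nhdsWithin 1 {1}ᶜ) (nhds 0) := by
      apply tendsto_const_nhds.congr'
      filter_upwards [self_mem_nhdsWithin, mem_nhdsWithin_of_mem_nhds
        (Ioo_mem_nhds (show (1:ℝ) - ε < 1 by linarith) (show (1:ℝ) < 1 + ε by linarith))] with ρ h1 h2
      exact (h ρ h2 h1).symm
    have he := tendsto_nhds_unique hl hl2
    simp only [alphaP] at he
    field_simp at he ⊢
    linarith
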